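/- arXiv:math/0601377 — 6 statements merged into one kernel-verified Lean document; each statement's English description precedes it below -/
import Mathlib

section
/- Let A be a Noetherian integral domain such that (𝔞 ∩ 𝔟)(𝔞 + 𝔟) = 𝔞𝔟 for every pair of ideals 𝔞, 𝔟 of A. Then A is a Dedekind domain. -/
open scoped nonZeroDivisors

/-- If `(a ⊓ b) * (a + b) = a * b` for all ideals of a domain, then every nonzero finitely generated
ideal divides a nonzero principal ideal. -/
theorem Ideal.FG.exists_mul_eq_span_singleton {A : Type*} [CommRing A] [IsDomain A]
    (h : ∀ a b : Ideal A, (a ⊓ b) * (a + b) = a * b) {I : Ideal A} (hI : I.FG) (hI0 : I ≠ ⊥) :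
    ∃ (J : Ideal A) (x : A), x ≠ 0 ∧ I * J = Ideal.span {x} := by
  induction I, hI using Submodule.fg_induction with
  | singleton x => exact ⟨⊤, x, fun h0 => hI0 (by simp [h0]), Ideal.mul_top _⟩
  | sup a b _ _ iha ihb =>
    by_cases ha : a = ⊥
    · subst ha
      rw [bot_sup_eq] at hI0 ⊢
      exact ihb hI0
    by_cases hb : b = ⊥
    · subst hb
      rw [sup_bot_eq] at hI0 ⊢
      exact iha hI0
    obtain ⟨J, x, hx, hJ⟩ := iha ha
    obtain ⟨K, y, hy, hK⟩ := ihb hb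
    refine ⟨(a ⊓ b) * (J * K), x * y, mul_ne_zero hx hy, ?_⟩
    rw [← Ideal.span_singleton_mul_span_singleton, ← hJ, ← hK, mul_mul_mul_comm, ← h a b,
      Submodule.add_eq_sup]
    ring

/-- A domain in which every nonzero ideal divides a nonzero principal ideal is
Dedekind. -/
theorem isDedekindDomain_of_exists_mul_eq_span_singleton {A : Type*} [CommRing A] [IsDomain A]
    (h : ∀ I : Ideal A, I ≠ ⊥ → ∃ (J : Ideal A) (x : A), x ≠ 0 ∧ I * J = Ideal.span {x}) :
    IsDedekindDomain A := by
  rw [isDedekindDomain_iff_mul_inv_cancel (K := FractionRing A)]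
  intro I hI
  obtain ⟨d, a, hd, rfl⟩ := FractionalIdeal.exists_eq_spanSingleton_mul I
  have ha : a ≠ ⊥ := by
    rintro rfl
    exact hI (by simp)
  obtain ⟨J, x, hx, hJ⟩ := h a ha
  have hd' : algebraMap A (FractionRing A) d ≠ 0 := by simpa using hd
  have hx' : algebraMap A (FractionRing A) x ≠ 0 := by simpa using hx
  rw [FractionalIdeal.mul_inv_cancel_iff]
  refine ⟨FractionalIdeal.spanSingleton A⁰
    (algebraMap A (FractionRing A) d * (algebraMap A (FractionRing A) x)⁻¹) * J, ?_⟩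
  rw [mul_mul_mul_comm, FractionalIdeal.spanSingleton_mul_spanSingleton,
    ← FractionalIdeal.coeIdeal_mul, hJ, FractionalIdeal.coeIdeal_span_singleton,
    FractionalIdeal.spanSingleton_mul_spanSingleton, inv_mul_cancel_left₀ hd',
    inv_mul_cancel₀ hx', FractionalIdeal.spanSingleton_one]

theorem statement6 {A : Type*} [CommRing A] [IsDomain A] [IsNoetherianRing A]
    (h : ∀ a b : Ideal A, (a ⊓ b) * (a + b) = a * b) :
    IsDedekindDomain A := by
  exact isDedekindDomain_of_exists_mul_eq_span_singleton fun I hI =>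
    Ideal.FG.exists_mul_eq_span_singleton h (IsNoetherian.noetherian I) hI
end

section
/- Let A be a Noetherian unique factorization domain. Then A is a principal ideal domain if and only if (𝔞 ∩ 𝔟)(𝔞 + 𝔟) = 𝔞𝔟 holds for every pair of ideals 𝔞, 𝔟 of A. -/
theorem Ideal.span_singleton_inf_span_singleton_eq_span_lcm {A : Type*} [CommRing A]
    [IsDomain A] [GCDMonoid A] (x y : A) :
    span {x} ⊓ span {y} = span {lcm x y} := by
  ext z
  simp only [mem_inf, mem_span_singleton, lcm_dvd_iff]

theorem IsBezout.of_inf_mul_add_eq_mul {A : Type*} [CommRing A] [IsDomain A] [GCDMonoid A]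
    (h : ∀ a b : Ideal A, (a ⊓ b) * (a + b) = a * b) : IsBezout A := by
  refine IsBezout.iff_span_pair_isPrincipal.mpr fun x y => ?_
  by_cases hxy : x = 0 ∨ y = 0
  · rcases hxy with rfl | rfl
    · exact ⟨y, by simp [Ideal.span_insert]⟩
    · exact ⟨x, by simp [Ideal.span_insert]⟩
  · refine ⟨GCDMonoid.gcd x y, ?_⟩
    have hl : lcm x y ≠ 0 := by rwa [Ne, lcm_eq_zero_iff]
    have key := h (Ideal.span {x}) (Ideal.span {y})
    rw [Ideal.span_singleton_inf_span_singleton_eq_span_lcm, Ideal.span_singleton_mul_span_singleton,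
      ← Ideal.span_singleton_eq_span_singleton.mpr (gcd_mul_lcm x y), mul_comm (GCDMonoid.gcd x y),
      ← Ideal.span_singleton_mul_span_singleton, Ideal.span_singleton_mul_right_inj hl] at key
    rw [Ideal.span_insert]
    exact key

theorem Ideal.inf_mul_add_eq_mul {A : Type*} [CommRing A] [IsDomain A] [IsPrincipalIdealRing A]
    [GCDMonoid A] (a b : Ideal A) : (a ⊓ b) * (a + b) = a * b := by
  obtain ⟨x, rfl⟩ := IsPrincipalIdealRing.principal a
  obtain ⟨y, rfl⟩ := IsPrincipalIdealRing.principal b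
  simp only [submodule_span_eq]
  rw [span_singleton_inf_span_singleton_eq_span_lcm, add_eq_sup, ← span_insert, ← span_gcd,
    span_singleton_mul_span_singleton, span_singleton_mul_span_singleton,
    span_singleton_eq_span_singleton, mul_comm]
  exact gcd_mul_lcm x y

theorem statement9 {A : Type*} [CommRing A] [IsDomain A] [IsNoetherianRing A]
    [UniqueFactorizationMonoid A] :
    IsPrincipalIdealRing A ↔ ∀ a b : Ideal A, (a ⊓ b) * (a + b) = a * b := by
  let _ : GCDMonoid A := UniqueFactorizationMonoid.toGCDMonoid A
  refine ⟨fun _ => Ideal.inf_mul_add_eq_mul, fun h => ?_⟩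
  have := IsBezout.of_inf_mul_add_eq_mul h
  infer_instance
end

section
/- Let A be a commutative ring and 𝔞, 𝔟, 𝔠 ideals of A. Then (𝔞 ∩ 𝔟 ∩ 𝔠) · (𝔞 + 𝔟)(𝔞 + 𝔠)(𝔟 + 𝔠) ⊆ 𝔞𝔟𝔠 · (𝔞 + 𝔟 + 𝔠). -/
theorem statement12 {A : Type*} [CommRing A] (a b c : Ideal A) :
    (a ⊓ b ⊓ c) * ((a + b) * (a + c) * (b + c)) ≤ a * b * c * (a + b + c) := by
  have ha : a ⊓ b ⊓ c ≤ a := inf_le_left.trans inf_le_left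
  have hb : a ⊓ b ⊓ c ≤ b := inf_le_left.trans inf_le_right
  have hc : a ⊓ b ⊓ c ≤ c := inf_le_right
  generalize a ⊓ b ⊓ c = d at ha hb hc ⊢
  calc d * ((a + b) * (a + c) * (b + c))
      = d * (a * b) * (a + b + c) + d * (a * c) * (a + c) + d * (b * c) * (a + b + c) := by ring
    _ ≤ c * (a * b) * (a + b + c) + b * (a * c) * (a + b + c) + a * (b * c) * (a + b + c) := by
      have hac : a + c ≤ a + b + c := sup_le_sup_right le_sup_left c
      gcongr
    _ = a * b * c * (a + b + c) := by
      rw [mul_comm c, mul_left_comm b, ← mul_assoc, add_idem, add_idem]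
end

section
/- Let A be a commutative ring and 𝔞, 𝔟, 𝔠, 𝔡 ideals of A. Then (𝔞 ∩ 𝔟 ∩ 𝔠 ∩ 𝔡) · (𝔞+𝔟)(𝔞+𝔠)(𝔞+𝔡)(𝔟+𝔠)(𝔟+𝔡)(𝔠+𝔡) · (𝔞+𝔟+𝔠+𝔡) ⊆ 𝔞𝔟𝔠𝔡 · (𝔞+𝔟+𝔠)(𝔞+𝔟+𝔡)(𝔞+𝔠+𝔡)(𝔟+𝔠+𝔡). -/
theorem Ideal.mul_add_le_mul_of_le {A : Type*} [CommRing A] {t c d : Ideal A}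
    (hc : t ≤ c) (hd : t ≤ d) : t * (c + d) ≤ c * d := by
  rw [mul_add, mul_comm c d]
  exact sup_le (mul_le_mul' hd le_rfl) (mul_comm d c ▸ mul_le_mul' hc le_rfl)

theorem Ideal.add_mul_add_mul_add_le {A : Type*} [CommRing A] (a b c : Ideal A) :
    (a + b) * (a + c) * (b + c) ≤ (a + b + c) * (a * b + a * c + b * c) := by
  have h : (a + b + c) * (a * b + a * c + b * c)
      = (a + b) * (a + c) * (b + c) + a * b * c := by ring
  exact h ▸ le_sup_left

theorem Ideal.add_mul_add_mul_sum_le {A : Type*} [CommRing A] (a b c d : Ideal A) :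
    (a + d) * (b + d) * (a + b + c + d)
      ≤ (a + b + d) * (a + c + d) * (b + c + d) := by
  have had : a + d ≤ a + c + d := sup_le_sup_right le_sup_left d
  have hbd : b + d ≤ b + c + d := sup_le_sup_right le_sup_left d
  have hbd' : b + d ≤ a + b + d := sup_le_sup_right le_sup_right d
  have hsum : a + b + c + d ≤ (a + b + d) + (b + c + d) := by
    simp only [Submodule.add_eq_sup]
    refine sup_le (sup_le (sup_le ?_ ?_) ?_) ?_
    · exact le_sup_of_le_left (le_sup_of_le_left le_sup_left)
    · exact le_sup_of_le_left (le_sup_of_le_left le_sup_right)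
    · exact le_sup_of_le_right (le_sup_of_le_left le_sup_right)
    · exact le_sup_of_le_left le_sup_right
  refine (mul_le_mul' le_rfl hsum).trans ?_
  rw [mul_add]
  refine sup_le ?_ ?_
  · calc (a + d) * (b + d) * (a + b + d)
        ≤ (a + c + d) * (b + c + d) * (a + b + d) :=
          mul_le_mul' (mul_le_mul' had hbd) le_rfl
      _ = _ := by ring
  · calc (a + d) * (b + d) * (b + c + d)
        ≤ (a + c + d) * (a + b + d) * (b + c + d) :=
          mul_le_mul' (mul_le_mul' had hbd') le_rfl
      _ = _ := by ring

theorem Ideal.mul_mul_add_mul_sum_le_of_le {A : Type*} [CommRing A] {t c d : Ideal A}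
    (a b : Ideal A) (hc : t ≤ c) (hd : t ≤ d) :
    t * (a * b) * ((a + d) * (b + d) * (c + d)) * (a + b + c + d)
      ≤ a * b * c * d * ((a + b + d) * (a + c + d) * (b + c + d)) :=
  calc t * (a * b) * ((a + d) * (b + d) * (c + d)) * (a + b + c + d)
      = a * b * (t * (c + d)) * ((a + d) * (b + d) * (a + b + c + d)) := by ring
    _ ≤ a * b * (c * d) * ((a + b + d) * (a + c + d) * (b + c + d)) :=
        mul_le_mul' (mul_le_mul' le_rfl (mul_add_le_mul_of_le hc hd))
          (add_mul_add_mul_sum_le a b c d)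
    _ = _ := by ring

theorem statement13 {A : Type*} [CommRing A] (a b c d : Ideal A) :
    (a ⊓ b ⊓ c ⊓ d) *
        ((a + b) * (a + c) * (a + d) * (b + c) * (b + d) * (c + d)) *
        (a + b + c + d)
      ≤ a * b * c * d *
        ((a + b + c) * (a + b + d) * (a + c + d) * (b + c + d)) := by
  have hd : a ⊓ b ⊓ c ⊓ d ≤ d := inf_le_right
  have hc : a ⊓ b ⊓ c ⊓ d ≤ c := inf_le_left.trans inf_le_right
  have hb : a ⊓ b ⊓ c ⊓ d ≤ b := inf_le_left.trans (inf_le_left.trans inf_le_right)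
  have ha : a ⊓ b ⊓ c ⊓ d ≤ a := inf_le_left.trans (inf_le_left.trans inf_le_left)
  generalize a ⊓ b ⊓ c ⊓ d = t at *
  have hab := Ideal.mul_mul_add_mul_sum_le_of_le a b hc hd
  have hac := Ideal.mul_mul_add_mul_sum_le_of_le a c hb hd
  have hbc := Ideal.mul_mul_add_mul_sum_le_of_le b c ha hd
  rw [show a * c * b * d * ((a + c + d) * (a + b + d) * (c + b + d))
    = a * b * c * d * ((a + b + d) * (a + c + d) * (b + c + d)) by ring] at hac
  rw [show b * c * a * d * ((b + c + d) * (b + a + d) * (c + a + d))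
    = a * b * c * d * ((a + b + d) * (a + c + d) * (b + c + d)) by ring] at hbc
  calc t * ((a + b) * (a + c) * (a + d) * (b + c) * (b + d) * (c + d)) * (a + b + c + d)
      = (a + b) * (a + c) * (b + c)
          * (t * ((a + d) * (b + d) * (c + d)) * (a + b + c + d)) := by ring
    _ ≤ (a + b + c) * (a * b + a * c + b * c)
          * (t * ((a + d) * (b + d) * (c + d)) * (a + b + c + d)) :=
        mul_le_mul' (Ideal.add_mul_add_mul_add_le a b c) le_rfl
    _ = (a + b + c) * (t * (a * b) * ((a + d) * (b + d) * (c + d)) * (a + b + c + d)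
          + t * (a * c) * ((a + d) * (c + d) * (b + d)) * (a + c + b + d)
          + t * (b * c) * ((b + d) * (c + d) * (a + d)) * (b + c + a + d)) := by ring
    _ ≤ (a + b + c) * (a * b * c * d * ((a + b + d) * (a + c + d) * (b + c + d))) :=
        mul_le_mul' le_rfl (sup_le (sup_le hab hac) hbc)
    _ = _ := by ring
end

section
/- Let A be a commutative ring and 𝔞, 𝔟, 𝔠, 𝔡, 𝔢 ideals of A. Then (𝔞 ∩ 𝔟 ∩ 𝔠 ∩ 𝔡 ∩ 𝔢) · ∏(𝔞ᵢ+𝔞ⱼ) · ∏(𝔞ᵢ+𝔞ⱼ+𝔞ₖ+𝔞ₗ) ⊆ 𝔞𝔟𝔠𝔡𝔢 · ∏(𝔞ᵢ+𝔞ⱼ+𝔞ₖ) · (𝔞+𝔟+𝔠+𝔡+𝔢), where the products on the left run over all 2-element and all 4-element subsets of {𝔞, 𝔟, 𝔠, 𝔡, 𝔢} respectively, and the product of triple sums on the right runs over all 3-element subsets of {𝔞, 𝔟, 𝔠, 𝔡, 𝔢}. -/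
/-! In the commutative idempotent semiring of ideals, the products of the `k`-fold sums of
`a, b, c, d, e` factor through the elementary symmetric polynomials `E₁, …, E₄`:
pairs give `E₁ E₂ E₃ E₄`, triples give `E₁³ E₂² E₃`, quadruples give `E₁³ E₂`.
The statement then reduces to `(a ⊓ b ⊓ c ⊓ d ⊓ e) * E₄ ≤ a * b * c * d * e`.
-/

section IdemCommSemiring

variable {S : Type*} [IdemCommSemiring S]

theorem IdemCommSemiring.ofNat_eq_one (n : ℕ) [n.AtLeastTwo] : (OfNat.ofNat n : S) = 1 := by
  have h (k : ℕ) : ((k + 1 : ℕ) : S) = 1 := by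
    induction k with
    | zero => simp
    | succ k ih => rw [Nat.cast_succ, ih, add_idem]
  rw [← Nat.cast_ofNat (R := S), ← Nat.sub_add_cancel (NeZero.one_le (n := OfNat.ofNat n)), h]

/-- The first elementary symmetric polynomial in four variables. -/
def esymmOne (a b c d : S) : S := a + b + c + d

/-- The second elementary symmetric polynomial in four variables. -/
def esymmTwo (a b c d : S) : S := a * b + a * c + a * d + b * c + b * d + c * d

/-- The third elementary symmetric polynomial in four variables. -/
def esymmThree (a b c d : S) : S := a * b * c + a * b * d + a * c * d + b * c * d

/-- The fourth elementary symmetric polynomial in four variables. -/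
def esymmFour (a b c d : S) : S := a * b * c * d

theorem prod_pairs_four (a b c d : S) :
    (a + b) * (a + c) * (a + d) * (b + c) * (b + d) * (c + d) =
      esymmOne a b c d * esymmTwo a b c d * esymmThree a b c d := by
  simp only [esymmOne, esymmTwo, esymmThree]
  ring_nf
  simp only [IdemCommSemiring.ofNat_eq_one, mul_one]

theorem prod_triples_four (a b c d : S) :
    (a + b + c) * (a + b + d) * (a + c + d) * (b + c + d) =
      esymmOne a b c d ^ 2 * esymmTwo a b c d := by
  simp only [esymmOne, esymmTwo]
  ring_nf
  simp only [IdemCommSemiring.ofNat_eq_one, mul_one]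

set_option maxRecDepth 20000 in
theorem prod_shifted_pairs_four (a b c d e : S) :
    (e + a + b) * (e + a + c) * (e + a + d) * (e + b + c) * (e + b + d) * (e + c + d) =
      (e ^ 3 + e ^ 2 * esymmOne a b c d + e * esymmOne a b c d ^ 2 +
          esymmOne a b c d * esymmTwo a b c d) *
        (e ^ 3 + e ^ 2 * esymmOne a b c d + e * esymmTwo a b c d + esymmThree a b c d) := by
  simp only [esymmOne, esymmTwo, esymmThree]
  ring_nf
  simp only [IdemCommSemiring.ofNat_eq_one, mul_one]

theorem esymm_succ_one_mul_two (a b c d e : S) :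
    (esymmOne a b c d + e) ^ 2 * (esymmTwo a b c d + e * esymmOne a b c d) =
      esymmOne a b c d * (e ^ 3 + e ^ 2 * esymmOne a b c d + e * esymmOne a b c d ^ 2 +
          esymmOne a b c d * esymmTwo a b c d) := by
  simp only [esymmOne, esymmTwo]
  ring_nf
  simp only [IdemCommSemiring.ofNat_eq_one, mul_one]

set_option maxRecDepth 20000 in
theorem esymm_succ_one_mul_two_mul_three (a b c d e : S) :
    (esymmOne a b c d + e) *
        (esymmTwo a b c d + e * esymmOne a b c d) *
        (esymmThree a b c d + e * esymmTwo a b c d) =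
      esymmOne a b c d * esymmTwo a b c d *
        (e ^ 3 + e ^ 2 * esymmOne a b c d + e * esymmTwo a b c d + esymmThree a b c d) := by
  simp only [esymmOne, esymmTwo, esymmThree]
  ring_nf
  simp only [IdemCommSemiring.ofNat_eq_one, mul_one]

set_option maxRecDepth 20000 in
theorem cubic_mul_esymm_succ_four (a b c d e : S) :
    (e ^ 3 + e ^ 2 * esymmOne a b c d + e * esymmTwo a b c d + esymmThree a b c d) *
        (esymmFour a b c d + e * esymmThree a b c d) =
      esymmThree a b c d * ((a + e) * (b + e) * (c + e) * (d + e)) := by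
  simp only [esymmOne, esymmTwo, esymmThree, esymmFour]
  ring_nf
  simp only [IdemCommSemiring.ofNat_eq_one, mul_one]

theorem prod_pairs_five (a b c d e : S) :
    (a + b) * (a + c) * (a + d) * (a + e) * (b + c) * (b + d) * (b + e) *
        (c + d) * (c + e) * (d + e) =
      (esymmOne a b c d + e) *
        (esymmTwo a b c d + e * esymmOne a b c d) *
        (esymmThree a b c d + e * esymmTwo a b c d) *
        (esymmFour a b c d + e * esymmThree a b c d) := by
  rw [esymm_succ_one_mul_two_mul_three, mul_assoc _ _ (esymmFour a b c d + e * esymmThree a b c d),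
    cubic_mul_esymm_succ_four, ← mul_assoc, ← prod_pairs_four]
  ring

theorem prod_triples_five (a b c d e : S) :
    (a + b + c) * (a + b + d) * (a + b + e) * (a + c + d) * (a + c + e) *
        (a + d + e) * (b + c + d) * (b + c + e) * (b + d + e) * (c + d + e) =
      (esymmOne a b c d + e) ^ 3 *
        (esymmTwo a b c d + e * esymmOne a b c d) ^ 2 *
        (esymmThree a b c d + e * esymmTwo a b c d) := by
  calc
    _ = ((a + b + c) * (a + b + d) * (a + c + d) * (b + c + d)) *
        ((e + a + b) * (e + a + c) * (e + a + d) * (e + b + c) * (e + b + d) * (e + c + d)) := by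
      ring
    _ = (esymmOne a b c d * (e ^ 3 + e ^ 2 * esymmOne a b c d + e * esymmOne a b c d ^ 2 +
          esymmOne a b c d * esymmTwo a b c d)) *
        (esymmOne a b c d * esymmTwo a b c d *
          (e ^ 3 + e ^ 2 * esymmOne a b c d + e * esymmTwo a b c d + esymmThree a b c d)) := by
      rw [prod_triples_four, prod_shifted_pairs_four]
      ring
    _ = _ := by
      rw [← esymm_succ_one_mul_two, ← esymm_succ_one_mul_two_mul_three]
      ring

set_option maxRecDepth 20000 in
theorem prod_quadruples_five (a b c d e : S) :
    (a + b + c + d) * (a + b + c + e) * (a + b + d + e) * (a + c + d + e) *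
        (b + c + d + e) =
      (esymmOne a b c d + e) ^ 3 *
        (esymmTwo a b c d + e * esymmOne a b c d) := by
  simp only [esymmOne, esymmTwo]
  ring_nf
  simp only [IdemCommSemiring.ofNat_eq_one, mul_one]

end IdemCommSemiring

theorem inf_mul_esymm_four_le {A : Type*} [CommRing A] (a b c d e : Ideal A) :
    (a ⊓ b ⊓ c ⊓ d ⊓ e) * (esymmFour a b c d + e * esymmThree a b c d) ≤ a * b * c * d * e := by
  have ha : a ⊓ b ⊓ c ⊓ d ⊓ e ≤ a := by simp only [inf_assoc, inf_le_left]
  have hb : a ⊓ b ⊓ c ⊓ d ⊓ e ≤ b :=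
    inf_le_left.trans (inf_le_left.trans (inf_le_left.trans inf_le_right))
  have hc : a ⊓ b ⊓ c ⊓ d ⊓ e ≤ c := inf_le_left.trans (inf_le_left.trans inf_le_right)
  have hd : a ⊓ b ⊓ c ⊓ d ⊓ e ≤ d := inf_le_left.trans inf_le_right
  have he : a ⊓ b ⊓ c ⊓ d ⊓ e ≤ e := inf_le_right
  generalize a ⊓ b ⊓ c ⊓ d ⊓ e = x at *
  calc
    _ = x * (a * b * c * d) + (x * (a * b * c * e) + x * (a * b * d * e) +
          x * (a * c * d * e) + x * (b * c * d * e)) := by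
      simp only [esymmThree, esymmFour]
      ring
    _ ≤ e * (a * b * c * d) + (d * (a * b * c * e) + c * (a * b * d * e) +
          b * (a * c * d * e) + a * (b * c * d * e)) := by
      simp only [Submodule.add_eq_sup]
      gcongr
    _ = 5 * (a * b * c * d * e) := by ring
    _ = _ := by rw [IdemCommSemiring.ofNat_eq_one, one_mul]

theorem statement14 {A : Type*} [CommRing A] (a b c d e : Ideal A) :
    (a ⊓ b ⊓ c ⊓ d ⊓ e) *
        ((a + b) * (a + c) * (a + d) * (a + e) * (b + c) * (b + d) * (b + e) *
          (c + d) * (c + e) * (d + e)) *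
        ((a + b + c + d) * (a + b + c + e) * (a + b + d + e) * (a + c + d + e) *
          (b + c + d + e))
      ≤ a * b * c * d * e *
        ((a + b + c) * (a + b + d) * (a + b + e) * (a + c + d) * (a + c + e) *
          (a + d + e) * (b + c + d) * (b + c + e) * (b + d + e) * (c + d + e)) *
        (a + b + c + d + e) := by
  rw [prod_pairs_five, prod_triples_five, prod_quadruples_five]
  calc
    _ = (a ⊓ b ⊓ c ⊓ d ⊓ e) * (esymmFour a b c d + e * esymmThree a b c d) *
        ((esymmOne a b c d + e) ^ 3 *
          (esymmTwo a b c d + e * esymmOne a b c d) ^ 2 *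
          (esymmThree a b c d + e * esymmTwo a b c d)) *
        (esymmOne a b c d + e) := by ring
    _ ≤ _ := by
      exact mul_le_mul' (mul_le_mul' (inf_mul_esymm_four_le a b c d e) le_rfl) le_rfl
end

section
/- In the polynomial ring ℝ[x,y,z], let 𝔞 = ⟨x⟩, 𝔟 = ⟨y⟩, 𝔠 = ⟨z⟩. Then (𝔞 + 𝔟 + 𝔠) · (𝔞 ∩ 𝔟)(𝔞 ∩ 𝔠)(𝔟 ∩ 𝔠) = ⟨x,y,z⟩ · ⟨xyz⟩², and this ideal is strictly contained in 𝔞𝔟𝔠 · (𝔞 ∩ 𝔟 ∩ 𝔠) = ⟨xyz⟩²; in particular the equality (*)₃ fails in ℝ[x,y,z]. -/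
open MvPolynomial

/-- Principal ideals generated by relatively prime elements intersect in their product. -/
theorem Ideal.span_singleton_inf_span_singleton_of_isRelPrime {R : Type*} [CommRing R]
    [DecompositionMonoid R] {p q : R} (h : IsRelPrime p q) :
    Ideal.span {p} ⊓ Ideal.span {q} = Ideal.span {p * q} := by
  ext r
  simp only [Ideal.mem_inf, Ideal.mem_span_singleton]
  exact ⟨fun hr => h.mul_dvd hr.1 hr.2,
    fun hr => ⟨(dvd_mul_right p q).trans hr, (dvd_mul_left q p).trans hr⟩⟩

/-- Distinct variables of a polynomial ring over a domain are relatively prime. -/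
theorem MvPolynomial.isRelPrime_X_X {σ R : Type*} [CommRing R] [IsDomain R] {i j : σ}
    (hij : i ≠ j) : IsRelPrime (X i : MvPolynomial σ R) (X j) :=
  (X_prime (i := i)).irreducible.isRelPrime_iff_not_dvd.2 fun h => hij (X_dvd_X.1 h)

theorem statement17 :
    let x : MvPolynomial (Fin 3) ℝ := X 0
    let y : MvPolynomial (Fin 3) ℝ := X 1
    let z : MvPolynomial (Fin 3) ℝ := X 2
    let a : Ideal (MvPolynomial (Fin 3) ℝ) := Ideal.span {x}
    let b : Ideal (MvPolynomial (Fin 3) ℝ) := Ideal.span {y}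
    let c : Ideal (MvPolynomial (Fin 3) ℝ) := Ideal.span {z}
    (a + b + c) * ((a ⊓ b) * (a ⊓ c) * (b ⊓ c))
        = Ideal.span {x, y, z} * Ideal.span {x * y * z} ^ 2 ∧
      a * b * c * (a ⊓ b ⊓ c) = Ideal.span {x * y * z} ^ 2 ∧
      (a + b + c) * ((a ⊓ b) * (a ⊓ c) * (b ⊓ c)) < a * b * c * (a ⊓ b ⊓ c) := by
  intro x y z a b c
  have hxy : IsRelPrime x y := isRelPrime_X_X (by decide)
  have hxz : IsRelPrime x z := isRelPrime_X_X (by decide)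
  have hyz : IsRelPrime y z := isRelPrime_X_X (by decide)
  have hab : a ⊓ b = a * b := by
    rw [Ideal.span_singleton_inf_span_singleton_of_isRelPrime hxy,
      Ideal.span_singleton_mul_span_singleton]
  have hac : a ⊓ c = a * c := by
    rw [Ideal.span_singleton_inf_span_singleton_of_isRelPrime hxz,
      Ideal.span_singleton_mul_span_singleton]
  have hbc : b ⊓ c = b * c := by
    rw [Ideal.span_singleton_inf_span_singleton_of_isRelPrime hyz,
      Ideal.span_singleton_mul_span_singleton]
  have habc : a ⊓ b ⊓ c = a * b * c := by
    rw [hab, Ideal.span_singleton_mul_span_singleton,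
      Ideal.span_singleton_inf_span_singleton_of_isRelPrime (hxz.mul_left hyz),
      Ideal.span_singleton_mul_span_singleton]
  have hprod : Ideal.span {x * y * z} = a * b * c := by
    simp only [a, b, c, Ideal.span_singleton_mul_span_singleton]
  have hsum : Ideal.span {x, y, z} = a + b + c := by
    simp only [a, b, c, Ideal.span_insert, Submodule.add_eq_sup, sup_assoc]
  have hleft : (a + b + c) * ((a ⊓ b) * (a ⊓ c) * (b ⊓ c))
      = Ideal.span {x, y, z} * Ideal.span {x * y * z} ^ 2 := by
    rw [hab, hac, hbc, hprod, hsum]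
    ring
  have hright : a * b * c * (a ⊓ b ⊓ c) = Ideal.span {x * y * z} ^ 2 := by
    rw [habc, hprod, sq]
  refine ⟨hleft, hright, ?_⟩
  rw [hleft, hright]
  refine lt_of_le_of_ne Ideal.mul_le_right fun heq => ?_
  have hne : (x * y * z) ^ 2 ≠ 0 :=
    pow_ne_zero 2 (mul_ne_zero (mul_ne_zero (X_ne_zero 0) (X_ne_zero 1)) (X_ne_zero 2))
  have htop : Ideal.span {x, y, z} = ⊤ := by
    rw [Ideal.span_singleton_pow, mul_comm] at heq
    exact (Ideal.span_singleton_mul_right_inj hne).1 (heq.trans (Ideal.mul_top _).symm)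
  have hle : Ideal.span {x, y, z} ≤ RingHom.ker (constantCoeff (σ := Fin 3) (R := ℝ)) := by
    rw [Ideal.span_le]
    rintro p (rfl | rfl | rfl) <;> simp [x, y, z, RingHom.mem_ker]
  exact RingHom.ker_ne_top _ (top_le_iff.1 (htop ▸ hle))
end
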